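/- For a metric space M the following are equivalent: (i) there exists a dense subset D of M carrying no nontrivial probability measure; (ii) every σ-finite Borel measure on M is concentrated on a separable subset, i.e. for every σ-finite Borel measure μ on M there exists a closed separable set S ⊆ M with μ(M \ S) = 0. -/

import Mathlib

open MeasureTheory

/-- A subset `A` of a space carries a *nontrivial probability measure* if there is a
probability measure on `A` (with the powerset σ-algebra `⊤`) giving every singleton
measure zero. -/
def HasNontrivialProbMeasure {M : Type*} (A : Set M) : Prop :=
  ∃ μ : @Measure ↥A ⊤, @IsProbabilityMeasure ↥A ⊤ μ ∧ ∀ x : ↥A, μ {x} = 0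

/-!
Given a dense set `D` without nontrivial probability measure, the complement of the support of `μ`
is a countable union of families of null balls, each family indexed by a subset of `D`. Well-order
`D` and send a point of the union of such a family to the least index of a ball containing it:
since the balls are open, the preimage of *every* subset of `D` is an `F_σ`. A union of positive
measure would therefore push forward to a nontrivial probability measure on `D`. The support itself
is separable because a disjoint family of sets of positive measure is countable.

Conversely, a union `D` of maximal `1/(n+1)`-separated sets is dense and meets every separable set
in a countable set. A nontrivial probability measure on `D`, viewed as a measure on the whole space,
vanishes on countable subsets of `D` and hence is not concentrated on any separable set.
-/

open Metric Set
open TopologicalSpace (PseudoMetrizableSpace pseudoMetrizableSpacePseudoMetric)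
open scoped ENNReal NNReal Topology

/-- A measure is *concentrated on a separable set* if some closed separable set has null
complement. Separability of a subset is `TopologicalSpace.IsSeparable`, which in metrizable spaces
agrees with separability of the subspace. -/
def IsConcentratedOnSeparable {X : Type*} [TopologicalSpace X] [MeasurableSpace X]
    (μ : Measure X) : Prop :=
  ∃ S : Set X, IsClosed S ∧ TopologicalSpace.IsSeparable S ∧ μ Sᶜ = 0

section SeparatedSets

variable {X : Type*} [PseudoEMetricSpace X] {t : Set X}

theorem exists_isSeparated_isCover (ε : ℝ≥0) (s : Set X) :
    ∃ t ⊆ s, IsSeparated ε t ∧ IsCover ε s t := by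
  obtain ⟨t, ht⟩ := zorn_subset {t | t ⊆ s ∧ IsSeparated ε t} fun c hc hchain ↦
    ⟨⋃₀ c, ⟨sUnion_subset fun t ht ↦ (hc ht).1,
      (pairwise_sUnion hchain.directedOn).2 fun t ht ↦ (hc ht).2⟩,
      fun _ ↦ subset_sUnion_of_mem⟩
  exact ⟨t, ht.prop.1, ht.prop.2, .of_maximal_isSeparated ht⟩

theorem pairwise_disjoint_eball_of_isSeparated {ε : ℝ≥0∞} (ht : IsSeparated ε t) :
    Pairwise fun x y : t ↦ Disjoint (eball (x : X) (ε / 2)) (eball (y : X) (ε / 2)) :=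
  fun x y hxy ↦ eball_disjoint <|
    (ENNReal.add_halves ε).trans_le (ht x.2 y.2 (Subtype.coe_ne_coe.2 hxy)).le

theorem countable_of_isSeparated_of_isSeparable {ε : ℝ≥0∞} (hε : ε ≠ 0) (ht : IsSeparated ε t)
    (hts : TopologicalSpace.IsSeparable t) : t.Countable := by
  have := hts.separableSpace
  exact Pairwise.countable_of_isOpen_disjoint
    (s := fun x : t ↦ (Subtype.val ⁻¹' eball (x : X) (ε / 2) : Set t))
    (fun x y hxy ↦ (pairwise_disjoint_eball_of_isSeparated ht hxy).preimage _)
    (fun x ↦ isOpen_eball.preimage continuous_subtype_val)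
    fun x ↦ ⟨x, mem_eball_self (ENNReal.half_pos hε)⟩

theorem countable_of_isSeparated_of_subset_support [MeasurableSpace X] [OpensMeasurableSpace X]
    {μ : Measure X} [SFinite μ] {ε : ℝ≥0∞} (hε : ε ≠ 0) (ht : IsSeparated ε t)
    (hts : t ⊆ μ.support) : t.Countable := by
  have hcount : {x : t | 0 < μ (eball (x : X) (ε / 2))}.Countable :=
    Measure.countable_meas_pos_of_disjoint_iUnion (fun _ ↦ measurableSet_eball)
      (pairwise_disjoint_eball_of_isSeparated ht)
  have hpos (x : t) : 0 < μ (eball (x : X) (ε / 2)) :=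
    (Measure.mem_support_iff_forall _).1 (hts x.2) _ (eball_mem_nhds _ (ENNReal.half_pos hε))
  exact countable_univ_iff.1 (hcount.mono fun x _ ↦ hpos x)

end SeparatedSets

section PseudoMetrizable

variable {X : Type*} [TopologicalSpace X] [PseudoMetrizableSpace X]

variable (X) in
theorem exists_dense_forall_isSeparable_countable_inter :
    ∃ D : Set X, Dense D ∧ ∀ S, TopologicalSpace.IsSeparable S → (D ∩ S).Countable := by
  let := pseudoMetrizableSpacePseudoMetric X
  choose t _ hsep hcover using fun n : ℕ ↦
    exists_isSeparated_isCover (1 / ((n : ℝ≥0) + 1)) (univ : Set X)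
  refine ⟨⋃ n, t n, fun x ↦ EMetric.mem_closure_iff.2 fun ε hε ↦ ?_, fun S hS ↦ ?_⟩
  · obtain ⟨δ, hδ, hδε⟩ := ENNReal.lt_iff_exists_nnreal_btwn.1 hε
    obtain ⟨n, hn⟩ := exists_nat_one_div_lt (ENNReal.coe_pos.1 hδ)
    obtain ⟨y, hy, hxy⟩ := hcover n (mem_univ x)
    exact ⟨y, mem_iUnion_of_mem n hy, hxy.trans_lt ((ENNReal.coe_lt_coe.2 hn).trans hδε)⟩
  · rw [iUnion_inter]
    exact countable_iUnion fun n ↦ countable_of_isSeparated_of_isSeparable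
      (ENNReal.coe_ne_zero.2 Nat.one_div_pos_of_nat.ne')
      ((hsep n).subset inter_subset_left) (hS.mono inter_subset_right)

variable [MeasurableSpace X] [OpensMeasurableSpace X]

theorem isSeparable_support (μ : Measure X) [SFinite μ] :
    TopologicalSpace.IsSeparable μ.support := by
  let := pseudoMetrizableSpacePseudoMetric X
  suffices h : ∀ ε > 0, ∃ t : Set X, t.Countable ∧ μ.support ⊆ ⋃ x ∈ t, closedEBall x ε from
    let ⟨t, _, ht⟩ := EMetric.subset_countable_closure_of_almost_dense_set _ h
    ⟨t, ht⟩
  intro ε hε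
  obtain ⟨δ, hδ, hδε⟩ := ENNReal.lt_iff_exists_nnreal_btwn.1 hε
  obtain ⟨t, hts, hsep, hcover⟩ := exists_isSeparated_isCover δ μ.support
  refine ⟨t, countable_of_isSeparated_of_subset_support hδ.ne' hsep hts, ?_⟩
  exact (isCover_iff_subset_iUnion_closedEBall.1 hcover).trans
    (iUnion₂_mono fun _ _ ↦ closedEBall_subset_closedEBall hδε.le)

theorem measurable_top_of_isLeast {ι : Type*} [LinearOrder ι] {U : ι → Set X}
    (hU : ∀ i, IsOpen (U i)) {f : X → ι} (hf : ∀ x, IsLeast {i | x ∈ U i} (f x)) :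
    Measurable[_, ⊤] f := by
  let := pseudoMetrizableSpacePseudoMetric X
  intro A _
  let F (n : ℕ) : Set X := {x | f x ∈ A ∧ ball x (1 / (n + 1)) ⊆ U (f x)}
  -- If `y ∈ F n` is close to `x`, then `y ∈ U (f x)` and `x ∈ U (f y)`, so the indices agree.
  have closure_subset (n : ℕ) : closure (F n) ⊆ f ⁻¹' A := by
    intro x hx
    have hnhds : U (f x) ∩ ball x (1 / (n + 1)) ∈ 𝓝 x :=
      Filter.inter_mem ((hU _).mem_nhds (hf x).1) (ball_mem_nhds x Nat.one_div_pos_of_nat)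
    obtain ⟨y, ⟨hyU, hyx⟩, hyA, hyball⟩ := mem_closure_iff_nhds.1 hx _ hnhds
    have hfxy : f x = f y :=
      le_antisymm ((hf x).2 (hyball (mem_ball_comm.1 hyx))) ((hf y).2 hyU)
    rwa [mem_preimage, hfxy]
  have subset_iUnion : f ⁻¹' A ⊆ ⋃ n, closure (F n) := by
    intro x hx
    obtain ⟨ε, hε, hball⟩ := Metric.isOpen_iff.1 (hU (f x)) x (hf x).1
    obtain ⟨n, hn⟩ := exists_nat_one_div_lt hε
    exact mem_iUnion_of_mem n (subset_closure ⟨hx, (ball_subset_ball hn.le).trans hball⟩)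
  rw [subset_iUnion.antisymm (iUnion_subset closure_subset)]
  exact .iUnion fun n ↦ isClosed_closure.measurableSet

end PseudoMetrizable

section NullUnions

variable {X Y : Type*} [MeasurableSpace X] {μ : Measure X} [SFinite μ] {D : Set Y}

theorem measure_eq_zero_of_measure_fiber_eq_zero (hD : ¬ HasNontrivialProbMeasure D) {f : X → D}
    (hf : Measurable[_, ⊤] f) (hμ : ∀ d, μ (f ⁻¹' {d}) = 0) : μ = 0 := by
  let : MeasurableSpace D := ⊤
  by_contra hne
  have : NeZero μ := ⟨hne⟩
  refine hD ⟨μ.toFinite.map f, Measure.isProbabilityMeasure_map hf.aemeasurable, fun d ↦ ?_⟩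
  rw [Measure.map_apply hf trivial, toFinite_apply_eq_zero_iff, hμ]

variable [TopologicalSpace X] [PseudoMetrizableSpace X] [OpensMeasurableSpace X]

theorem measure_eq_zero_of_isOpen_cover (hD : ¬ HasNontrivialProbMeasure D) {U : D → Set X}
    (hU : ∀ d, IsOpen (U d)) (hcover : ∀ x, ∃ d, x ∈ U d) (hμ : ∀ d, μ (U d) = 0) : μ = 0 := by
  obtain ⟨_, _⟩ := exists_wellFoundedLT D
  choose f hf using fun x ↦
    (exists_minimal_of_wellFoundedLT (x ∈ U ·) (hcover x)).imp fun _ ↦ minimal_iff_isLeast.1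
  exact measure_eq_zero_of_measure_fiber_eq_zero hD (measurable_top_of_isLeast hU hf) fun d ↦
    measure_mono_null (fun x (hx : f x = d) ↦ hx ▸ (hf x).1) (hμ d)

theorem measure_iUnion_null_of_isOpen (hD : ¬ HasNontrivialProbMeasure D) {U : D → Set X}
    (hU : ∀ d, IsOpen (U d)) (hμ : ∀ d, μ (U d) = 0) : μ (⋃ d, U d) = 0 := by
  let W : Set X := ⋃ d, U d
  have hW : MeasurableSet W := (isOpen_iUnion hU).measurableSet
  have comap_eq_zero_iff (s : Set W) :
      μ.toFinite.comap Subtype.val s = 0 ↔ μ (Subtype.val '' s) = 0 := by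
    rw [comap_subtype_coe_apply hW, toFinite_apply_eq_zero_iff]
  have hcover (x : W) : ∃ d, (x : X) ∈ U d := mem_iUnion.1 x.2
  have hzero : μ.toFinite.comap (Subtype.val : W → X) = 0 :=
    measure_eq_zero_of_isOpen_cover hD (fun d ↦ (hU d).preimage continuous_subtype_val) hcover
      fun d ↦ (comap_eq_zero_iff _).2 (measure_mono_null (image_preimage_subset _ _) (hμ d))
  have himage : μ (Subtype.val '' (univ : Set W)) = 0 :=
    (comap_eq_zero_iff univ).1 (by rw [hzero, Measure.coe_zero, Pi.zero_apply])
  rwa [Subtype.coe_image_univ] at himage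

theorem measure_compl_support_of_dense {D : Set X} (hD : Dense D)
    (hD' : ¬ HasNontrivialProbMeasure D) : μ μ.supportᶜ = 0 := by
  let := pseudoMetrizableSpacePseudoMetric X
  let U (n : ℕ) (d : D) : Set X :=
    ⋃ _ : μ (ball (d : X) (1 / (n + 1))) = 0, ball (d : X) (1 / (n + 1))
  have hU (n : ℕ) : μ (⋃ d, U n d) = 0 :=
    measure_iUnion_null_of_isOpen hD' (fun d ↦ isOpen_iUnion fun _ ↦ isOpen_ball)
      fun d ↦ measure_iUnion_null id
  refine measure_mono_null (fun x hx ↦ ?_) (measure_iUnion_null hU)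
  obtain ⟨ε, hε, hball⟩ := nhds_basis_ball.notMem_measureSupport.1 hx
  obtain ⟨n, hn⟩ := exists_nat_one_div_lt (half_pos hε)
  obtain ⟨d, hdD, hxd⟩ := hD.exists_dist_lt x (Nat.one_div_pos_of_nat (n := n))
  have hsub : ball d (1 / (n + 1)) ⊆ ball x ε :=
    ball_subset_ball' (by rw [dist_comm]; linarith)
  exact mem_iUnion₂.2 ⟨n, ⟨d, hdD⟩, mem_iUnion.2 ⟨measure_mono_null hsub hball, hxd⟩⟩

theorem isConcentratedOnSeparable_of_dense {D : Set X} (hD : Dense D)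
    (hD' : ¬ HasNontrivialProbMeasure D) : IsConcentratedOnSeparable μ :=
  ⟨μ.support, Measure.isClosed_support, isSeparable_support μ,
    measure_compl_support_of_dense hD hD'⟩

end NullUnions

theorem not_hasNontrivialProbMeasure_of_countable_inter {X : Type*} [TopologicalSpace X]
    [MeasurableSpace X] [OpensMeasurableSpace X] {D : Set X}
    (hD : ∀ S, TopologicalSpace.IsSeparable S → (D ∩ S).Countable)
    (h : ∀ μ : Measure X, IsProbabilityMeasure μ → IsConcentratedOnSeparable μ) :
    ¬ HasNontrivialProbMeasure D := by
  let : MeasurableSpace D := ⊤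
  rintro ⟨μ, hμ, hsingleton⟩
  have : NullSingletonClass μ := ⟨hsingleton⟩
  have hval : Measurable (Subtype.val : D → X) := measurable_from_top
  obtain ⟨S, hS, hsep, hnull⟩ :=
    h (μ.map Subtype.val) (Measure.isProbabilityMeasure_map hval.aemeasurable)
  rw [Measure.map_apply hval hS.measurableSet.compl] at hnull
  have hcount : (Subtype.val ⁻¹' S : Set D).Countable := by
    rw [← Subtype.preimage_coe_self_inter]
    exact (hD S hsep).preimage Subtype.val_injective
  have huniv : μ univ = 0 := by
    rw [← union_compl_self (Subtype.val ⁻¹' S)]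
    exact measure_union_null (hcount.measure_zero μ) hnull
  exact IsProbabilityMeasure.ne_zero μ (Measure.measure_univ_eq_zero.1 huniv)

theorem stmt6_general {M : Type*} [TopologicalSpace M] [PseudoMetrizableSpace M]
    [MeasurableSpace M] [OpensMeasurableSpace M] :
    List.TFAE [
      ∃ D : Set M, Dense D ∧ ¬ HasNontrivialProbMeasure D,
      ∀ μ : Measure M, IsProbabilityMeasure μ → IsConcentratedOnSeparable μ,
      ∀ μ : Measure M, SigmaFinite μ → IsConcentratedOnSeparable μ,
      ∀ μ : Measure M, SFinite μ → IsConcentratedOnSeparable μ] := by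
  tfae_have 1 → 4 := fun ⟨_, hD, hD'⟩ _ _ ↦ isConcentratedOnSeparable_of_dense hD hD'
  tfae_have 4 → 3 := fun h μ _ ↦ h μ inferInstance
  tfae_have 3 → 2 := fun h μ _ ↦ h μ inferInstance
  tfae_have 2 → 1 := fun h ↦
    let ⟨D, hD, hcount⟩ := exists_dense_forall_isSeparable_countable_inter M
    ⟨D, hD, not_hasNontrivialProbMeasure_of_countable_inter hcount h⟩
  tfae_finish

theorem stmt6 {M : Type*} [MetricSpace M] [MeasurableSpace M] [BorelSpace M] :
    (∃ D : Set M, Dense D ∧ ¬ HasNontrivialProbMeasure D) ↔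
      ∀ μ : Measure M, SigmaFinite μ →
        ∃ S : Set M, IsClosed S ∧ TopologicalSpace.IsSeparable S ∧ μ Sᶜ = 0 :=
  stmt6_general.out 0 2
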